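/- arXiv:1608.08184 — 2 statements merged into one kernel-verified Lean document; each statement's English description precedes it below -/
import Mathlib

section
/- For all u, v ∈ V_p, the bilinear form L(u,v) := B(u, P v) satisfies the identity L(u,v) = ∫_{−1}^{1} ((I u)'(s), (I v)'(s))_{MA⁻¹M} ds + (τ²/4) ∫_{−1}^{1} (u(s), v(s))_A ds + (τ/2)(u(1), v(1))_M + (τ/2)(u(−1), v(−1))_M. In particular, L is a symmetric positive definite bilinear form on V_p. -/
/-!
The reconstruction subtracts `v(-1) φ`, where `φ = (-1)^p (L_p - L_{p+1}) / 2` satisfies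
`φ(-1) = 1`, `φ(1) = 0` and is orthogonal to all polynomials of degree less than `p`. Integrating
by parts, `φ'` acts on polynomials of degree at most `p` as minus evaluation at `-1`, so replacing
`u'` by `(I u)'` absorbs the jump term: for `g ∈ V_p`,
`B(u, g) = ∫ ((I u)', g)_M + (τ/2) ∫ (u, g)_A`.
Inserting `g = P v` and cancelling `A⁻¹ A` leaves, apart from the two integrals of the identity,
`(τ/2) ∫ [((I u)', v)_M + (u, (I v)')_M]`. Undoing the replacement in both terms and integrating by
parts turns this into the endpoint terms, which carry a plus sign also at `-1` because the jump
there has been counted twice.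
-/

open Matrix Polynomial

/-- The `k`-th Legendre polynomial (Rodrigues' formula), normalized so that `L_k(1) = 1`. -/
noncomputable def legendre (k : ℕ) : Polynomial ℝ :=
  ((2 ^ k * (Nat.factorial k) : ℝ))⁻¹ •
    ((fun q => Polynomial.derivative q)^[k] ((Polynomial.X ^ 2 - 1) ^ k))

/-- Evaluation at `s` of the `ℝⁿ`-valued polynomial with coefficients `c` (degree ≤ p). -/
noncomputable def pev {n p : ℕ} (c : Fin (p + 1) → Fin n → ℝ) (s : ℝ) : Fin n → ℝ :=
  ∑ j : Fin (p + 1), s ^ (j : ℕ) • c j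

/-- Evaluation at `s` of the derivative of the `ℝⁿ`-valued polynomial with coefficients `c`. -/
noncomputable def pdev {n p : ℕ} (c : Fin (p + 1) → Fin n → ℝ) (s : ℝ) : Fin n → ℝ :=
  ∑ j : Fin (p + 1), ((((j : ℕ) : ℝ)) * s ^ ((j : ℕ) - 1)) • c j

/-- Evaluation at `s` of `(I v)'`, the derivative of the reconstruction `I v` of the
`ℝⁿ`-valued polynomial `v` with coefficients `c`, where the reconstruction operator
`I v := v − v(−1)·(−1)^p (L_p − L_{p+1})/2` acts coefficientwise. -/
noncomputable def reconD {n p : ℕ} (c : Fin (p + 1) → Fin n → ℝ) (s : ℝ) : Fin n → ℝ :=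
  pdev c s -
    ((-1 : ℝ) ^ p * (Polynomial.derivative (legendre p - legendre (p + 1))).eval s / 2) •
      pev c (-1)

/-- The DG bilinear form `B(u, ·)` applied to a test function `g : ℝ → ℝⁿ`:
`B(u,g) = ∫_{−1}^{1} (u'(s), g(s))_M ds + (u(−1), g(−1))_M + (τ/2) ∫_{−1}^{1} (u(s), g(s))_A ds`,
where `(u,v)_M := vᵀ M u`. -/
noncomputable def Bform {n p : ℕ} (M A : Matrix (Fin n) (Fin n) ℝ) (τ : ℝ)
    (c : Fin (p + 1) → Fin n → ℝ) (g : ℝ → Fin n → ℝ) : ℝ :=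
  (∫ s in (-1 : ℝ)..1, g s ⬝ᵥ (M *ᵥ pdev c s)) + g (-1) ⬝ᵥ (M *ᵥ pev c (-1)) +
    (τ / 2) * ∫ s in (-1 : ℝ)..1, g s ⬝ᵥ (A *ᵥ pev c s)

/-- The operator `P v := A⁻¹ M (I v)' + (τ/2) v`, evaluated at `s`. -/
noncomputable def Pop {n p : ℕ} (M A : Matrix (Fin n) (Fin n) ℝ) (τ : ℝ)
    (c : Fin (p + 1) → Fin n → ℝ) (s : ℝ) : Fin n → ℝ :=
  (A⁻¹ * M) *ᵥ reconD c s + (τ / 2) • pev c s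

section Polynomial

lemma derivative_mem_degreeLT {R : Type*} [Semiring R] {q : R[X]} {m : ℕ}
    (hq : q ∈ degreeLT R (m + 1)) : derivative q ∈ degreeLT R m := by
  rw [mem_degreeLT, degree_lt_iff_coeff_zero] at hq ⊢
  intro k hk
  rw [coeff_derivative, hq (k + 1) (Nat.succ_le_succ hk), zero_mul]

lemma integral_derivative_mul (w q : ℝ[X]) (a b : ℝ) :
    ∫ s in a..b, (derivative w).eval s * q.eval s =
      w.eval b * q.eval b - w.eval a * q.eval a -
        ∫ s in a..b, w.eval s * (derivative q).eval s := by
  have h := intervalIntegral.integral_mul_deriv_eq_deriv_mul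
    (fun s _ ↦ w.hasDerivAt s) (fun s _ ↦ q.hasDerivAt s)
    ((derivative w).continuous.intervalIntegrable a b)
    ((derivative q).continuous.intervalIntegrable a b)
  linarith

lemma integral_iterate_derivative_mul_eq_zero {w q : ℝ[X]} {a b : ℝ} {m : ℕ}
    (ha : ∀ j < m, (derivative^[j] w).eval a = 0) (hb : ∀ j < m, (derivative^[j] w).eval b = 0)
    (hq : q ∈ degreeLT ℝ m) :
    ∫ s in a..b, (derivative^[m] w).eval s * q.eval s = 0 := by
  induction m generalizing q with
  | zero =>
    have hq_zero : q = 0 := by simpa [mem_degreeLT, Nat.WithBot.lt_zero_iff] using hq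
    simp [hq_zero]
  | succ m ih =>
    rw [Function.iterate_succ_apply', integral_derivative_mul, ha m m.lt_succ_self,
      hb m m.lt_succ_self, ih (fun j hj ↦ ha j (hj.trans m.lt_succ_self))
        (fun j hj ↦ hb j (hj.trans m.lt_succ_self)) (derivative_mem_degreeLT hq)]
    simp

lemma eval_iterate_derivative_pow_eq_zero {R : Type*} [CommSemiring R] {f : R[X]} {x : R}
    (hx : f.IsRoot x) {m k : ℕ} (hmk : m < k) : (derivative^[m] (f ^ k)).eval x = 0 :=
  eval_eq_zero_of_dvd_of_eval_eq_zero
    ((dvd_pow_self f (Nat.sub_ne_zero_of_lt hmk)).trans (pow_sub_dvd_iterate_derivative_pow f k m))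
    hx

end Polynomial

section Legendre

lemma legendre_eq (k : ℕ) :
    legendre k = (2 ^ k * (k.factorial : ℝ))⁻¹ • derivative^[k] ((X ^ 2 - 1) ^ k) :=
  rfl

lemma legendre_eval_of_sq_eq_one (k : ℕ) {x : ℝ} (hx : x ^ 2 = 1) :
    (legendre k).eval x = x ^ k := by
  have hfactor : ((X ^ 2 - 1 : ℝ[X]) ^ k).map (algebraMap ℝ ℝ) = (X - C x) ^ k * (X + C x) ^ k := by
    rw [Algebra.algebraMap_self, Polynomial.map_id, ← mul_pow, ← map_one C, ← hx, C_pow]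
    ring
  have hderiv := aeval_iterate_derivative_self _ k x hfactor
  rw [coe_aeval_eq_eval] at hderiv
  rw [legendre_eq, eval_smul, hderiv]
  simp only [eval_pow, eval_add, eval_X, eval_C, nsmul_eq_mul, smul_eq_mul, ← two_mul, mul_pow]
  field_simp

lemma legendre_mem_degreeLT (k : ℕ) : legendre k ∈ degreeLT ℝ (k + 1) := by
  rw [degreeLT_succ_eq_degreeLE, mem_degreeLE, ← natDegree_le_iff_degree_le]
  calc (legendre k).natDegree
      ≤ (derivative^[k] ((X ^ 2 - 1 : ℝ[X]) ^ k)).natDegree := natDegree_smul_le _ _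
    _ ≤ ((X ^ 2 - 1 : ℝ[X]) ^ k).natDegree - k := natDegree_iterate_derivative _ k
    _ ≤ k * 2 - k := by
      gcongr
      exact natDegree_pow_le_of_le k (by compute_degree)
    _ = k := by lia

lemma integral_legendre_mul_eq_zero {k : ℕ} {q : ℝ[X]} (hq : q ∈ degreeLT ℝ k) :
    ∫ s in (-1 : ℝ)..1, (legendre k).eval s * q.eval s = 0 := by
  have hroot {x : ℝ} (hx : x ^ 2 = 1) : (X ^ 2 - 1 : ℝ[X]).IsRoot x := by simp [hx]
  have hrodrigues := integral_iterate_derivative_mul_eq_zero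
    (fun _ hj ↦ eval_iterate_derivative_pow_eq_zero (hroot neg_one_sq) hj)
    (fun _ hj ↦ eval_iterate_derivative_pow_eq_zero (hroot (one_pow 2)) hj) hq
  simp only [legendre_eq, eval_smul, smul_eq_mul, mul_assoc, intervalIntegral.integral_const_mul,
    hrodrigues, mul_zero]

end Legendre

section LiftPoly

/-- The polynomial `φ = (-1)^p (L_p - L_{p+1}) / 2` of the reconstruction `I v = v - v(-1) φ`. -/
noncomputable def liftPoly (p : ℕ) : ℝ[X] :=
  C ((-1) ^ p / 2) * (legendre p - legendre (p + 1))

lemma liftPoly_eval_one (p : ℕ) : (liftPoly p).eval 1 = 0 := by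
  simp [liftPoly, legendre_eval_of_sq_eq_one]

lemma liftPoly_eval_neg_one (p : ℕ) : (liftPoly p).eval (-1) = 1 := by
  have hsq : ((-1 : ℝ) ^ p) ^ 2 = 1 := by rw [← pow_mul, mul_comm, pow_mul]; norm_num
  simp only [liftPoly, eval_mul, eval_C, eval_sub, legendre_eval_of_sq_eq_one _ neg_one_sq]
  linear_combination hsq

lemma derivative_liftPoly_mem_degreeLT (p : ℕ) : derivative (liftPoly p) ∈ degreeLT ℝ (p + 1) := by
  refine derivative_mem_degreeLT ?_
  rw [liftPoly, ← smul_eq_C_mul]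
  exact Submodule.smul_mem _ _ (Submodule.sub_mem _
    (degreeLT_mono p.succ.le_succ (legendre_mem_degreeLT p)) (legendre_mem_degreeLT (p + 1)))

lemma integral_liftPoly_mul_eq_zero {p : ℕ} {q : ℝ[X]} (hq : q ∈ degreeLT ℝ p) :
    ∫ s in (-1 : ℝ)..1, (liftPoly p).eval s * q.eval s = 0 := by
  have hp := integral_legendre_mul_eq_zero hq
  have hp_succ := integral_legendre_mul_eq_zero (degreeLT_mono p.le_succ hq)
  simp only [liftPoly, eval_mul, eval_C, eval_sub, mul_assoc, sub_mul,
    intervalIntegral.integral_const_mul]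
  rw [intervalIntegral.integral_sub (Continuous.intervalIntegrable (by fun_prop) _ _)
    (Continuous.intervalIntegrable (by fun_prop) _ _), hp, hp_succ, sub_zero, mul_zero]

lemma integral_derivative_liftPoly_mul {p : ℕ} {q : ℝ[X]} (hq : q ∈ degreeLT ℝ (p + 1)) :
    ∫ s in (-1 : ℝ)..1, (derivative (liftPoly p)).eval s * q.eval s = -q.eval (-1) := by
  rw [integral_derivative_mul, integral_liftPoly_mul_eq_zero (derivative_mem_degreeLT hq),
    liftPoly_eval_one, liftPoly_eval_neg_one]
  ring

end LiftPoly

section IsVecPoly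

variable {ι : Type*} [Fintype ι] {p : ℕ} {g h : ℝ → ι → ℝ}

/-- `g` is a vector-valued polynomial function of degree at most `p`, i.e. an element of `V_p`.
Testing against every vector `w`, rather than coordinate by coordinate, reduces stability under
matrices to a transposition. -/
def IsVecPoly (p : ℕ) (g : ℝ → ι → ℝ) : Prop :=
  ∀ w : ι → ℝ, ∃ q ∈ degreeLT ℝ (p + 1), ∀ s, g s ⬝ᵥ w = q.eval s

namespace IsVecPoly

lemma add (hg : IsVecPoly p g) (hh : IsVecPoly p h) : IsVecPoly p (fun s ↦ g s + h s) := fun w ↦ by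
  obtain ⟨q, hq, hgq⟩ := hg w
  obtain ⟨r, hr, hhr⟩ := hh w
  exact ⟨q + r, Submodule.add_mem _ hq hr, fun s ↦ by rw [add_dotProduct, hgq, hhr, eval_add]⟩

lemma const_smul (hg : IsVecPoly p g) (a : ℝ) : IsVecPoly p (fun s ↦ a • g s) := fun w ↦ by
  obtain ⟨q, hq, hgq⟩ := hg w
  exact ⟨a • q, Submodule.smul_mem _ a hq, fun s ↦ by rw [smul_dotProduct, hgq, eval_smul]⟩

lemma mulVec {κ : Type*} [Fintype κ] (hg : IsVecPoly p g) (N : Matrix κ ι ℝ) :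
    IsVecPoly p (fun s ↦ N *ᵥ g s) := fun w ↦ by
  obtain ⟨q, hq, hgq⟩ := hg (Nᵀ *ᵥ w)
  exact ⟨q, hq, fun s ↦ by rw [← hgq, dotProduct_transpose_mulVec, dotProduct_comm]⟩

lemma continuous (hg : IsVecPoly p g) : Continuous g := by
  classical
  refine continuous_pi fun i ↦ ?_
  obtain ⟨q, -, hgq⟩ := hg (Pi.single i 1)
  simp only [dotProduct_single_one] at hgq
  simpa only [hgq] using q.continuous

lemma continuous_dotProduct_mulVec {κ : Type*} [Fintype κ] {h : ℝ → κ → ℝ} {r : ℕ}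
    (hg : IsVecPoly p g) (hh : IsVecPoly r h) (N : Matrix ι κ ℝ) :
    Continuous fun s ↦ g s ⬝ᵥ N *ᵥ h s :=
  hg.continuous.dotProduct (hh.mulVec N).continuous

lemma intervalIntegrable_dotProduct_mulVec {κ : Type*} [Fintype κ] {h : ℝ → κ → ℝ} {r : ℕ}
    (hg : IsVecPoly p g) (hh : IsVecPoly r h) (N : Matrix ι κ ℝ) (a b : ℝ) :
    IntervalIntegrable (fun s ↦ g s ⬝ᵥ N *ᵥ h s) MeasureTheory.volume a b :=
  (hg.continuous_dotProduct_mulVec hh N).intervalIntegrable a b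

end IsVecPoly

end IsVecPoly

section CoefficientVectors

variable {n p : ℕ}

lemma pev_dotProduct (c : Fin (p + 1) → Fin n → ℝ) (w : Fin n → ℝ) (s : ℝ) :
    pev c s ⬝ᵥ w = (ofFn (p + 1) fun j ↦ c j ⬝ᵥ w).eval s := by
  simp only [pev, sum_dotProduct, smul_dotProduct, ofFn_eq_sum_monomial, eval_finsetSum,
    eval_monomial, smul_eq_mul, mul_comm]

lemma pdev_dotProduct (c : Fin (p + 1) → Fin n → ℝ) (w : Fin n → ℝ) (s : ℝ) :
    pdev c s ⬝ᵥ w = (derivative (ofFn (p + 1) fun j ↦ c j ⬝ᵥ w)).eval s := by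
  simp only [pdev, sum_dotProduct, smul_dotProduct, ofFn_eq_sum_monomial, derivative_sum,
    derivative_monomial, eval_finsetSum, eval_monomial, smul_eq_mul]
  exact Finset.sum_congr rfl fun j _ ↦ by ring

lemma reconD_eq (c : Fin (p + 1) → Fin n → ℝ) (s : ℝ) :
    reconD c s = pdev c s - (derivative (liftPoly p)).eval s • pev c (-1) := by
  simp only [reconD, liftPoly, derivative_C_mul, eval_mul, eval_C, mul_div_right_comm]

lemma isVecPoly_pev (c : Fin (p + 1) → Fin n → ℝ) : IsVecPoly p (pev c) := fun w ↦
  ⟨_, mem_degreeLT.2 (ofFn_degree_lt _), pev_dotProduct c w⟩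

lemma isVecPoly_pdev (c : Fin (p + 1) → Fin n → ℝ) : IsVecPoly p (pdev c) := fun w ↦
  ⟨_, degreeLT_mono p.le_succ (derivative_mem_degreeLT (mem_degreeLT.2 (ofFn_degree_lt _))),
    pdev_dotProduct c w⟩

lemma isVecPoly_reconD (c : Fin (p + 1) → Fin n → ℝ) : IsVecPoly p (reconD c) := fun w ↦ by
  obtain ⟨q, hq, hcq⟩ := isVecPoly_pdev c w
  refine ⟨q - (pev c (-1) ⬝ᵥ w) • derivative (liftPoly p), Submodule.sub_mem _ hq
    (Submodule.smul_mem _ _ (derivative_liftPoly_mem_degreeLT p)), fun s ↦ ?_⟩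
  rw [reconD_eq, sub_dotProduct, smul_dotProduct, hcq, eval_sub, eval_smul, smul_eq_mul,
    smul_eq_mul, mul_comm]

lemma isVecPoly_Pop (M A : Matrix (Fin n) (Fin n) ℝ) (τ : ℝ) (c : Fin (p + 1) → Fin n → ℝ) :
    IsVecPoly p (Pop M A τ c) :=
  ((isVecPoly_reconD c).mulVec _).add ((isVecPoly_pev c).const_smul _)

lemma exists_mem_pev_ne_zero {S : Set ℝ} (hS : S.Infinite) {c : Fin (p + 1) → Fin n → ℝ}
    (hc : c ≠ 0) : ∃ s ∈ S, pev c s ≠ 0 := by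
  by_contra! hzero
  refine hc (funext₂ fun j i ↦ ?_)
  have hpoly : ofFn (p + 1) (fun j ↦ c j ⬝ᵥ Pi.single i 1) = 0 :=
    eq_zero_of_infinite_isRoot _ (hS.mono fun s hs ↦ show IsRoot _ s by
      rw [IsRoot, ← pev_dotProduct, hzero s hs, zero_dotProduct])
  have hcoeff := congrFun (injective_ofFn (p + 1) (hpoly.trans (map_zero _).symm)) j
  simpa using hcoeff

lemma hasDerivAt_pev (c : Fin (p + 1) → Fin n → ℝ) (s : ℝ) : HasDerivAt (pev c) (pdev c s) s :=
  HasDerivAt.fun_sum fun j _ ↦ (hasDerivAt_pow (j : ℕ) s).smul_const (c j)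

end CoefficientVectors

section EnergyIdentity

lemma hasDerivAt_dotProduct {ι : Type*} [Fintype ι] {f g : ℝ → ι → ℝ} {f' g' : ι → ℝ} {s : ℝ}
    (hf : HasDerivAt f f' s) (hg : HasDerivAt g g' s) :
    HasDerivAt (fun t ↦ f t ⬝ᵥ g t) (f' ⬝ᵥ g s + f s ⬝ᵥ g') s := by
  rw [hasDerivAt_pi] at hf hg
  simp only [dotProduct, ← Finset.sum_add_distrib]
  exact HasDerivAt.fun_sum fun i _ ↦ (hf i).mul (hg i)

variable {n p : ℕ}

lemma integral_pdev_add_integral_pev (N : Matrix (Fin n) (Fin n) ℝ)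
    (c d : Fin (p + 1) → Fin n → ℝ) (a b : ℝ) :
    (∫ s in a..b, pdev d s ⬝ᵥ N *ᵥ pev c s) + ∫ s in a..b, pev d s ⬝ᵥ N *ᵥ pdev c s =
      pev d b ⬝ᵥ N *ᵥ pev c b - pev d a ⬝ᵥ N *ᵥ pev c a := by
  have hint₁ := (isVecPoly_pdev d).intervalIntegrable_dotProduct_mulVec (isVecPoly_pev c) N a b
  have hint₂ := (isVecPoly_pev d).intervalIntegrable_dotProduct_mulVec (isVecPoly_pdev c) N a b
  rw [← intervalIntegral.integral_add hint₁ hint₂]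
  exact intervalIntegral.integral_eq_sub_of_hasDerivAt
    (fun s _ ↦ hasDerivAt_dotProduct (hasDerivAt_pev d s)
      (N.mulVecLin.toContinuousLinearMap.hasFDerivAt.comp_hasDerivAt s (hasDerivAt_pev c s)))
    (hint₁.add hint₂)

lemma integral_dotProduct_mulVec_reconD {g : ℝ → Fin n → ℝ} (hg : IsVecPoly p g)
    (N : Matrix (Fin n) (Fin n) ℝ) (c : Fin (p + 1) → Fin n → ℝ) :
    ∫ s in (-1 : ℝ)..1, g s ⬝ᵥ N *ᵥ reconD c s =
      (∫ s in (-1 : ℝ)..1, g s ⬝ᵥ N *ᵥ pdev c s) + g (-1) ⬝ᵥ N *ᵥ pev c (-1) := by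
  obtain ⟨q, hq, hgq⟩ := hg (N *ᵥ pev c (-1))
  simp only [reconD_eq, mulVec_sub, dotProduct_sub, mulVec_smul, dotProduct_smul, hgq, smul_eq_mul]
  rw [intervalIntegral.integral_sub
      (hg.intervalIntegrable_dotProduct_mulVec (isVecPoly_pdev c) N _ _)
      (Continuous.intervalIntegrable (by fun_prop) _ _),
    integral_derivative_liftPoly_mul hq, sub_neg_eq_add]

lemma integral_reconD_add_integral_pev (N : Matrix (Fin n) (Fin n) ℝ)
    (c d : Fin (p + 1) → Fin n → ℝ) :
    (∫ s in (-1 : ℝ)..1, reconD d s ⬝ᵥ N *ᵥ pev c s) +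
        ∫ s in (-1 : ℝ)..1, pev d s ⬝ᵥ N *ᵥ reconD c s =
      pev d 1 ⬝ᵥ N *ᵥ pev c 1 + pev d (-1) ⬝ᵥ N *ᵥ pev c (-1) := by
  have hc := integral_dotProduct_mulVec_reconD (isVecPoly_pev d) N c
  have hd := integral_dotProduct_mulVec_reconD (isVecPoly_pev c) Nᵀ d
  simp only [dotProduct_transpose_mulVec] at hd
  linear_combination hc + hd + integral_pdev_add_integral_pev N c d (-1) 1

end EnergyIdentity

section PreconditionedForm

variable {n p : ℕ} {M A : Matrix (Fin n) (Fin n) ℝ}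

lemma dotProduct_mulVec_comm_of_isSymm {ι R : Type*} [Fintype ι] [CommSemiring R]
    {N : Matrix ι ι R} (hN : N.IsSymm) (x y : ι → R) : x ⬝ᵥ N *ᵥ y = y ⬝ᵥ N *ᵥ x := by
  rw [← dotProduct_transpose_mulVec, hN.eq]

lemma Pop_dotProduct_mulVec (hM : M.IsSymm) (hA : A.IsSymm) (N : Matrix (Fin n) (Fin n) ℝ) (τ : ℝ)
    (d : Fin (p + 1) → Fin n → ℝ) (s : ℝ) (y : Fin n → ℝ) :
    Pop M A τ d s ⬝ᵥ N *ᵥ y =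
      reconD d s ⬝ᵥ (M * A⁻¹ * N) *ᵥ y + τ / 2 * (pev d s ⬝ᵥ N *ᵥ y) := by
  have htranspose : (A⁻¹ * M)ᵀ = M * A⁻¹ := by rw [transpose_mul, hM.eq, hA.inv.eq]
  rw [Pop, add_dotProduct, smul_dotProduct, smul_eq_mul, ← mulVec_mulVec y, ← htranspose,
    dotProduct_transpose_mulVec, dotProduct_comm (N *ᵥ y)]

lemma Bform_of_isVecPoly (M A : Matrix (Fin n) (Fin n) ℝ) (τ : ℝ) (c : Fin (p + 1) → Fin n → ℝ)
    {g : ℝ → Fin n → ℝ} (hg : IsVecPoly p g) :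
    Bform M A τ c g = (∫ s in (-1 : ℝ)..1, g s ⬝ᵥ M *ᵥ reconD c s) +
      τ / 2 * ∫ s in (-1 : ℝ)..1, g s ⬝ᵥ A *ᵥ pev c s := by
  rw [Bform, integral_dotProduct_mulVec_reconD hg]

lemma Bform_Pop_eq (hM : M.IsSymm) (hA : A.IsSymm) (hA_unit : IsUnit A) (τ : ℝ)
    (c d : Fin (p + 1) → Fin n → ℝ) :
    Bform M A τ c (Pop M A τ d) =
      (∫ s in (-1 : ℝ)..1, reconD d s ⬝ᵥ (M * A⁻¹ * M) *ᵥ reconD c s) +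
        τ ^ 2 / 4 * (∫ s in (-1 : ℝ)..1, pev d s ⬝ᵥ A *ᵥ pev c s) +
        τ / 2 * (pev d 1 ⬝ᵥ M *ᵥ pev c 1) +
        τ / 2 * (pev d (-1) ⬝ᵥ M *ᵥ pev c (-1)) := by
  have hcancel : M * A⁻¹ * A = M := by
    rw [Matrix.mul_assoc, nonsing_inv_mul A ((isUnit_iff_isUnit_det A).1 hA_unit), Matrix.mul_one]
  have hev := isVecPoly_pev (n := n) (p := p)
  have hrecon := isVecPoly_reconD (n := n) (p := p)
  rw [Bform_of_isVecPoly M A τ c (isVecPoly_Pop M A τ d)]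
  simp only [Pop_dotProduct_mulVec hM hA, hcancel]
  rw [intervalIntegral.integral_add
      ((hrecon d).intervalIntegrable_dotProduct_mulVec (hrecon c) _ _ _)
      (((hev d).intervalIntegrable_dotProduct_mulVec (hrecon c) M _ _).const_mul _),
    intervalIntegral.integral_add
      ((hrecon d).intervalIntegrable_dotProduct_mulVec (hev c) M _ _)
      (((hev d).intervalIntegrable_dotProduct_mulVec (hev c) A _ _).const_mul _),
    intervalIntegral.integral_const_mul, intervalIntegral.integral_const_mul]
  linear_combination (τ / 2) * integral_reconD_add_integral_pev M c d

lemma Bform_Pop_comm (hM : M.IsSymm) (hA : A.IsSymm) (hA_unit : IsUnit A) (τ : ℝ)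
    (c d : Fin (p + 1) → Fin n → ℝ) :
    Bform M A τ c (Pop M A τ d) = Bform M A τ d (Pop M A τ c) := by
  have hK : (M * A⁻¹ * M).IsSymm := by
    rw [IsSymm, transpose_mul, transpose_mul, hM.eq, hA.inv.eq, Matrix.mul_assoc]
  simp only [Bform_Pop_eq hM hA hA_unit, dotProduct_mulVec_comm_of_isSymm hK (reconD d _),
    dotProduct_mulVec_comm_of_isSymm hA (pev d _), dotProduct_mulVec_comm_of_isSymm hM (pev d _)]

lemma integral_pev_dotProduct_mulVec_pos (hA : A.PosDef) {c : Fin (p + 1) → Fin n → ℝ}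
    (hc : c ≠ 0) {a b : ℝ} (hab : a < b) : 0 < ∫ s in a..b, pev c s ⬝ᵥ A *ᵥ pev c s := by
  obtain ⟨s, hs, hne⟩ := exists_mem_pev_ne_zero (Set.Icc_infinite hab) hc
  have hcont := (isVecPoly_pev c).continuous_dotProduct_mulVec (isVecPoly_pev c) A
  exact intervalIntegral.integral_pos hab hcont.continuousOn
    (fun t _ ↦ by simpa using hA.posSemidef.dotProduct_mulVec_nonneg (pev c t))
    ⟨s, hs, by simpa using hA.dotProduct_mulVec_pos hne⟩

lemma Bform_Pop_pos (hM : M.PosSemidef) (hA : A.PosDef) {τ : ℝ} (hτ : 0 < τ)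
    {c : Fin (p + 1) → Fin n → ℝ} (hc : c ≠ 0) : 0 < Bform M A τ c (Pop M A τ c) := by
  have hM_nonneg (x : Fin n → ℝ) : 0 ≤ x ⬝ᵥ M *ᵥ x := by
    simpa using hM.dotProduct_mulVec_nonneg x
  have hK_nonneg (x : Fin n → ℝ) : 0 ≤ x ⬝ᵥ (M * A⁻¹ * M) *ᵥ x := by
    have hK := hA.inv.posSemidef.conjTranspose_mul_mul_same M
    rw [hM.isHermitian.eq] at hK
    simpa using hK.dotProduct_mulVec_nonneg x
  have hrecon : 0 ≤ ∫ s in (-1 : ℝ)..1, reconD c s ⬝ᵥ (M * A⁻¹ * M) *ᵥ reconD c s :=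
    intervalIntegral.integral_nonneg (by norm_num) fun s _ ↦ hK_nonneg _
  have hmass := integral_pev_dotProduct_mulVec_pos hA hc (show (-1 : ℝ) < 1 by norm_num)
  have hright := hM_nonneg (pev c 1)
  have hleft := hM_nonneg (pev c (-1))
  rw [Bform_Pop_eq (isHermitian_iff_isSymm.1 hM.isHermitian)
    (isHermitian_iff_isSymm.1 hA.isHermitian) hA.isUnit]
  positivity

theorem Lform_identity_general (hM : M.IsSymm) (hA : A.IsSymm) (hA_unit : IsUnit A) (τ : ℝ) :
    (∀ c d : Fin (p + 1) → Fin n → ℝ,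
      Bform M A τ c (fun s ↦ Pop M A τ d s)
        = (∫ s in (-1 : ℝ)..1, reconD d s ⬝ᵥ ((M * A⁻¹ * M) *ᵥ reconD c s)) +
          (τ ^ 2 / 4) * (∫ s in (-1 : ℝ)..1, pev d s ⬝ᵥ (A *ᵥ pev c s)) +
          (τ / 2) * (pev d 1 ⬝ᵥ (M *ᵥ pev c 1)) +
          (τ / 2) * (pev d (-1) ⬝ᵥ (M *ᵥ pev c (-1)))) ∧
    (∀ c d : Fin (p + 1) → Fin n → ℝ,
      Bform M A τ c (fun s ↦ Pop M A τ d s) = Bform M A τ d (fun s ↦ Pop M A τ c s)) ∧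
    (M.PosSemidef → A.PosDef → 0 < τ → ∀ c : Fin (p + 1) → Fin n → ℝ, c ≠ 0 →
      0 < Bform M A τ c (fun s ↦ Pop M A τ c s)) :=
  ⟨Bform_Pop_eq hM hA hA_unit τ, Bform_Pop_comm hM hA hA_unit τ,
    fun hM_nonneg hA_pos hτ _ hc ↦ Bform_Pop_pos hM_nonneg hA_pos hτ hc⟩

end PreconditionedForm

/-- **Theorem (identity for the left-preconditioned form).** For all `u, v ∈ V_p`, the
bilinear form `L(u,v) := B(u, P v)` satisfies
`L(u,v) = ∫_{−1}^{1} ((I u)', (I v)')_{MA⁻¹M} ds + (τ²/4) ∫_{−1}^{1} (u, v)_A ds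
+ (τ/2)(u(1), v(1))_M + (τ/2)(u(−1), v(−1))_M`, where `(u,v)_{MA⁻¹M} := vᵀ M A⁻¹ M u`.
In particular, `L` is a symmetric positive definite bilinear form on `V_p`. -/
theorem Lform_identity {n p : ℕ} (M A : Matrix (Fin n) (Fin n) ℝ)
    (hM : M.PosDef) (hA : A.PosDef) (τ : ℝ) (hτ : 0 < τ) :
    (∀ c d : Fin (p + 1) → Fin n → ℝ,
      Bform M A τ c (fun s => Pop M A τ d s)
        = (∫ s in (-1 : ℝ)..1, reconD d s ⬝ᵥ ((M * A⁻¹ * M) *ᵥ reconD c s)) +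
          (τ ^ 2 / 4) * (∫ s in (-1 : ℝ)..1, pev d s ⬝ᵥ (A *ᵥ pev c s)) +
          (τ / 2) * (pev d 1 ⬝ᵥ (M *ᵥ pev c 1)) +
          (τ / 2) * (pev d (-1) ⬝ᵥ (M *ᵥ pev c (-1)))) ∧
    (∀ c d : Fin (p + 1) → Fin n → ℝ,
      Bform M A τ c (fun s => Pop M A τ d s) = Bform M A τ d (fun s => Pop M A τ c s)) ∧
    (∀ c : Fin (p + 1) → Fin n → ℝ, c ≠ 0 →
      0 < Bform M A τ c (fun s => Pop M A τ c s)) := by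
  obtain ⟨identity, comm, pos⟩ := Lform_identity_general (p := p)
    (isHermitian_iff_isSymm.1 hM.isHermitian) (isHermitian_iff_isSymm.1 hA.isHermitian) hA.isUnit τ
  exact ⟨identity, comm, pos hM.posSemidef hA hτ⟩
end

section
/- There exists a positive constant C, independent of j and p, such that for every integer p ≥ 0 and every j with 0 ≤ j ≤ p, the eigenvalues λ_0 ≥ λ_1 ≥ … ≥ λ_p of the generalized eigenvalue problem λ ∫_{−1}^{1} (I φ)'(I v)' ds = ∫_{−1}^{1} φ v ds (for all v ∈ P_p) satisfy λ_j ≤ C (j+1)^{−2}. -/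
open Polynomial

/-- The reconstruction operator `I : P_p → P_{p+1}`,
`I v := v − v(−1)·(−1)^p (L_p − L_{p+1})/2`. -/
noncomputable def recon (p : ℕ) (v : Polynomial ℝ) : Polynomial ℝ :=
  v - (v.eval (-1) * (-1 : ℝ) ^ p / 2) • (legendre p - legendre (p + 1))

/-!
Put `w = (I v)'` and `g k = ⟪w, L k⟫` in `L²(-1,1)`. As `I v` vanishes at `-1`, integration by parts
gives `(2 m + 1) ⟪I v, L m⟫ = g (m - 1) - g (m + 1)`, where truncated subtraction gives the right
value at `m = 0`; the correction `v - I v` only changes `g (p + 1) = 0` into `-g p` at `m = p`. By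
Parseval, `w ⟂ P_{j-1}` therefore forces `‖v‖² ≤ 16 (j + 1)⁻² ‖w‖²`. This is a set of `j` linear
conditions on `v`, so the min-max principle gives `λ_j ≤ 16 (j + 1)⁻²`.
-/

open Finset

section MinMax

variable {K V ι κ : Type*} [Field K] [AddCommGroup V] [Module K V] [Fintype ι] [Fintype κ]

lemma exists_ne_zero_forall_linearCombination_eq_zero (hcard : Fintype.card κ < Fintype.card ι)
    (φ : ι → V) (ℓ : κ → Module.Dual K V) :
    ∃ x : ι → K, x ≠ 0 ∧ ∀ k, ℓ k (Fintype.linearCombination K φ x) = 0 := by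
  let F : (ι → K) →ₗ[K] κ → K := LinearMap.pi ℓ ∘ₗ Fintype.linearCombination K φ
  have hker : F.ker ≠ ⊥ := F.ker_ne_bot_of_finrank_lt (by simpa using hcard)
  obtain ⟨x, hx, hx0⟩ := (Submodule.ne_bot_iff _).mp hker
  exact ⟨x, hx0, congrFun hx⟩

lemma bilinForm_linearCombination_self_of_diagonal [DecidableEq ι] {B : LinearMap.BilinForm K V}
    {φ : ι → V} {d : ι → K} (hB : ∀ i j, B (φ i) (φ j) = if i = j then d i else 0) (x : ι → K) :
    B (Fintype.linearCombination K φ x) (Fintype.linearCombination K φ x) =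
      ∑ i, d i * x i ^ 2 := by
  simp only [Fintype.linearCombination_apply, map_sum, map_smul, LinearMap.sum_apply,
    LinearMap.smul_apply, hB, smul_eq_mul, mul_ite, mul_zero, sum_ite_eq', mem_univ, if_true]
  exact sum_congr rfl fun i _ => by ring

/-- The upper half of the Courant–Fischer min-max principle. -/
theorem le_of_diagonal_of_forall_form_le [LinearOrder K] [IsStrictOrderedRing K] [DecidableEq ι]
    {A B : LinearMap.BilinForm K V} {φ : ι → V} {lam : ι → K} {μ c : K} {ℓ : κ → Module.Dual K V}
    (hcard : Fintype.card κ < Fintype.card ι)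
    (hA : ∀ i j, A (φ i) (φ j) = if i = j then 1 else 0)
    (hB : ∀ i j, B (φ i) (φ j) = if i = j then lam i else 0) (hμ : ∀ i, μ ≤ lam i)
    (hc : ∀ v ∈ Submodule.span K (Set.range φ), (∀ k, ℓ k v = 0) → B v v ≤ c * A v v) :
    μ ≤ c := by
  obtain ⟨x, hx, hℓ⟩ := exists_ne_zero_forall_linearCombination_eq_zero hcard φ ℓ
  have hpos : 0 < ∑ i, x i ^ 2 := by
    obtain ⟨i, hi⟩ := Function.ne_iff.mp hx
    exact sum_pos' (fun i _ => sq_nonneg _) ⟨i, mem_univ i, by simpa using sq_pos_of_ne_zero hi⟩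
  have hmem : Fintype.linearCombination K φ x ∈ Submodule.span K (Set.range φ) := by
    rw [← Fintype.range_linearCombination]
    exact LinearMap.mem_range_self _ x
  refine le_of_mul_le_mul_right ?_ hpos
  calc μ * ∑ i, x i ^ 2 ≤ ∑ i, lam i * x i ^ 2 := by
        rw [mul_sum]
        exact sum_le_sum fun i _ => mul_le_mul_of_nonneg_right (hμ i) (sq_nonneg _)
    _ = B _ _ := (bilinForm_linearCombination_self_of_diagonal hB x).symm
    _ ≤ c * A _ _ := hc _ hmem hℓ
    _ = c * ∑ i, x i ^ 2 := by
        rw [bilinForm_linearCombination_self_of_diagonal (d := 1) hA x]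
        simp only [Pi.one_apply, one_mul]

end MinMax

section L2Form

/-- The `L²(a,b)` inner product `∫_a^b f g ds`, as a bilinear form on real polynomials. -/
noncomputable def l2Form (a b : ℝ) : LinearMap.BilinForm ℝ ℝ[X] :=
  (LinearMap.mul ℝ ℝ[X]).compr₂
    { toFun f := ∫ s in a..b, f.eval s
      map_add' f g := by
        simp only [eval_add]
        exact intervalIntegral.integral_add (f.continuous.intervalIntegrable _ _)
          (g.continuous.intervalIntegrable _ _)
      map_smul' c f := by simp }

variable (a b : ℝ) (f g : ℝ[X])

lemma l2Form_apply : l2Form a b f g = ∫ s in a..b, f.eval s * g.eval s := by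
  simp [l2Form]

lemma l2Form_comm : l2Form a b f g = l2Form a b g f := by
  simp only [l2Form_apply, mul_comm]

lemma l2Form_derivative_left :
    l2Form a b (derivative f) g =
      f.eval b * g.eval b - f.eval a * g.eval a - l2Form a b f (derivative g) := by
  rw [l2Form_apply, l2Form_apply, intervalIntegral.integral_mul_deriv_eq_deriv_mul
    (fun s _ => f.hasDerivAt s) (fun s _ => g.hasDerivAt s)
    ((derivative f).continuous.intervalIntegrable _ _)
    ((derivative g).continuous.intervalIntegrable _ _), sub_sub_cancel]

variable {a b f}

lemma l2Form_iterate_derivative_left {k : ℕ} (ha : ∀ i < k, (derivative^[i] f).eval a = 0)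
    (hb : ∀ i < k, (derivative^[i] f).eval b = 0) :
    l2Form a b (derivative^[k] f) g = (-1) ^ k * l2Form a b f (derivative^[k] g) := by
  induction k generalizing g with
  | zero => simp
  | succ k ih =>
    rw [Function.iterate_succ_apply', l2Form_derivative_left, ha k k.lt_succ_self,
      hb k k.lt_succ_self, ih _ (fun i hi => ha i (hi.trans k.lt_succ_self))
        (fun i hi => hb i (hi.trans k.lt_succ_self)), ← Function.iterate_succ_apply]
    ring

end L2Form

local notation "⟪" f ", " g "⟫" => l2Form (-1) 1 f g

section Legendre

lemma natDegree_iterate_derivative_eq {R : Type*} [Semiring R] [IsAddTorsionFree R] (f : R[X])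
    (k : ℕ) : (derivative^[k] f).natDegree = f.natDegree - k := by
  induction k with
  | zero => rfl
  | succ k ih => rw [Function.iterate_succ_apply', natDegree_derivative, ih, Nat.sub_sub]

-- The `map` along the identity is the shape that `aeval_iterate_derivative_self` expects.
lemma map_X_sq_sub_one_pow_eq_X_sub_C_one_mul (k : ℕ) :
    ((X ^ 2 - 1 : ℝ[X]) ^ k).map (algebraMap ℝ ℝ) = (X - C 1) ^ k * (X + 1) ^ k := by
  rw [Algebra.algebraMap_self, Polynomial.map_id, ← mul_pow, C_1]
  ring

lemma map_X_sq_sub_one_pow_eq_X_sub_C_neg_one_mul (k : ℕ) :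
    ((X ^ 2 - 1 : ℝ[X]) ^ k).map (algebraMap ℝ ℝ) = (X - C (-1)) ^ k * (X - 1) ^ k := by
  rw [Algebra.algebraMap_self, Polynomial.map_id, ← mul_pow, C_neg, C_1]
  ring

lemma legendre_eval_one (k : ℕ) : (legendre k).eval 1 = 1 := by
  have h := aeval_iterate_derivative_self _ _ _ (map_X_sq_sub_one_pow_eq_X_sub_C_one_mul k)
  simp only [coe_aeval_eq_eval, eval_pow, eval_add, eval_X, eval_one, nsmul_eq_mul] at h
  rw [legendre, eval_smul, h, smul_eq_mul]
  field_simp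
  norm_num

lemma legendre_eval_neg_one (k : ℕ) : (legendre k).eval (-1) = (-1) ^ k := by
  have h := aeval_iterate_derivative_self _ _ _ (map_X_sq_sub_one_pow_eq_X_sub_C_neg_one_mul k)
  simp only [coe_aeval_eq_eval, eval_pow, eval_sub, eval_X, eval_one, nsmul_eq_mul] at h
  rw [legendre, eval_smul, h, smul_eq_mul]
  field_simp
  rw [← mul_pow]
  norm_num

lemma natDegree_legendre (k : ℕ) : (legendre k).natDegree = k := by
  rw [legendre, natDegree_smul _ (by positivity), natDegree_iterate_derivative_eq, natDegree_pow,
    ← C_1, natDegree_X_pow_sub_C]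
  omega

lemma legendre_ne_zero (k : ℕ) : legendre k ≠ 0 := fun h => by
  simpa [h] using legendre_eval_one k

lemma degree_legendre (k : ℕ) : (legendre k).degree = k := by
  rw [degree_eq_natDegree (legendre_ne_zero k), natDegree_legendre]

lemma legendre_zero : legendre 0 = 1 := by simp [legendre]

lemma legendre_one : legendre 1 = X := by
  have hderiv : derivative (X ^ 2 - 1 : ℝ[X]) = (2 : ℝ) • X := by
    rw [derivative_sub, derivative_X_sq, derivative_one, sub_zero, smul_eq_C_mul]
  simp [legendre, hderiv, smul_smul]

lemma linearMap_ext_legendre {M : Type*} [AddCommGroup M] [Module ℝ M] {F G : ℝ[X] →ₗ[ℝ] M}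
    (h : ∀ k, F (legendre k) = G (legendre k)) : F = G := by
  let S : Polynomial.Sequence ℝ := ⟨legendre, degree_legendre⟩
  exact LinearMap.ext_on_range
    (S.span fun i => isUnit_iff_ne_zero.mpr (leadingCoeff_ne_zero.mpr (S.ne_zero i))) h

lemma l2Form_legendre_eq_zero_of_degree_lt {k : ℕ} {f : ℝ[X]} (hf : f.degree < k) :
    ⟪f, legendre k⟫ = 0 := by
  have hend (c : ℝ) (q : ℝ[X])
      (hq : ((X ^ 2 - 1 : ℝ[X]) ^ k).map (algebraMap ℝ ℝ) = (X - C c) ^ k * q) :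
      ∀ i < k, (derivative^[i] ((X ^ 2 - 1 : ℝ[X]) ^ k)).eval c = 0 := fun i hi => by
    simpa using aeval_iterate_derivative_of_lt _ _ _ hq hi
  rw [l2Form_comm, legendre, map_smul, LinearMap.smul_apply, l2Form_iterate_derivative_left _
    (hend _ _ (map_X_sq_sub_one_pow_eq_X_sub_C_neg_one_mul k))
    (hend _ _ (map_X_sq_sub_one_pow_eq_X_sub_C_one_mul k)),
    iterate_derivative_eq_zero_of_degree_lt hf, map_zero, mul_zero, smul_zero]

lemma l2Form_legendre_of_natDegree_lt {f : ℝ[X]} {k : ℕ} (hf : f.natDegree < k) :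
    ⟪f, legendre k⟫ = 0 :=
  l2Form_legendre_eq_zero_of_degree_lt (degree_le_natDegree.trans_lt (by exact_mod_cast hf))

lemma l2Form_derivative_legendre_of_le {i j : ℕ} (h : j ≤ i) :
    ⟪derivative (legendre j), legendre i⟫ = 0 := by
  refine l2Form_legendre_eq_zero_of_degree_lt
    ((degree_derivative_lt (legendre_ne_zero j)).trans_le ?_)
  rw [degree_legendre]
  exact_mod_cast h

lemma l2Form_derivative_legendre_of_lt {i j : ℕ} (h : i < j) :
    ⟪derivative (legendre j), legendre i⟫ = 1 - (-1) ^ (i + j) := by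
  rw [l2Form_derivative_left, l2Form_comm, l2Form_derivative_legendre_of_le h.le]
  simp only [legendre_eval_one, legendre_eval_neg_one]
  ring

lemma l2Form_legendre_of_ne {i j : ℕ} (h : i ≠ j) : ⟪legendre i, legendre j⟫ = 0 := by
  wlog hlt : i < j generalizing i j
  · rw [l2Form_comm]
    exact this h.symm (by omega)
  exact l2Form_legendre_eq_zero_of_degree_lt (by rw [degree_legendre]; exact_mod_cast hlt)

lemma degree_X_mul_derivative_sub_natDegree_smul_lt {R : Type*} [CommRing R] {f : R[X]}
    (hf : f ≠ 0) : (X * derivative f - (f.natDegree : R) • f).degree < f.degree := by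
  rw [degree_eq_natDegree hf, degree_lt_iff_coeff_zero]
  intro m hm
  have hcoeff : (X * derivative f).coeff m = m * f.coeff m := by
    cases m with
    | zero => simp
    | succ m => rw [coeff_X_mul, coeff_derivative, Nat.cast_succ, mul_comm]
  rw [coeff_sub, coeff_smul, hcoeff, smul_eq_mul, ← sub_mul]
  rcases hm.eq_or_lt with rfl | hlt
  · rw [sub_self, zero_mul]
  · rw [coeff_eq_zero_of_natDegree_lt hlt, mul_zero]

lemma l2Form_legendre_self (k : ℕ) : ⟪legendre k, legendre k⟫ = 2 / (2 * (k : ℝ) + 1) := by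
  have hlower : ⟪X * derivative (legendre k), legendre k⟫ = k * ⟪legendre k, legendre k⟫ := by
    have hdeg := degree_X_mul_derivative_sub_natDegree_smul_lt (legendre_ne_zero k)
    rw [natDegree_legendre, degree_legendre] at hdeg
    have h := l2Form_legendre_eq_zero_of_degree_lt hdeg
    rwa [map_sub, map_smul, LinearMap.sub_apply, LinearMap.smul_apply, smul_eq_mul,
      sub_eq_zero] at h
  have hmove : ⟪X * legendre k, derivative (legendre k)⟫ =
      ⟪X * derivative (legendre k), legendre k⟫ := by
    simp only [l2Form_apply, eval_mul, mul_right_comm]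
  have hparts := l2Form_derivative_left (-1) 1 (X * legendre k) (legendre k)
  rw [derivative_mul, derivative_X, one_mul, map_add, LinearMap.add_apply, hmove, hlower, eval_mul,
    eval_mul, eval_X, eval_X, legendre_eval_one, legendre_eval_neg_one] at hparts
  have hsign : (-1 : ℝ) ^ k * (-1) ^ k = 1 := by rw [← mul_pow]; norm_num
  rw [eq_div_iff (by positivity)]
  linear_combination hparts + hsign

/-- Parseval's identity for the Legendre expansion. -/
lemma l2Form_eq_sum_legendre {n : ℕ} {f : ℝ[X]} (hf : f.natDegree ≤ n) (g : ℝ[X]) :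
    ⟪f, g⟫ = ∑ k ∈ range (n + 1),
      (2 * (k : ℝ) + 1) / 2 * (⟪f, legendre k⟫ * ⟪g, legendre k⟫) := by
  have hext : l2Form (-1) 1 f = ∑ k ∈ range (n + 1),
      ((2 * (k : ℝ) + 1) / 2 * ⟪f, legendre k⟫) • l2Form (-1) 1 (legendre k) := by
    refine linearMap_ext_legendre fun j => ?_
    simp only [LinearMap.sum_apply, LinearMap.smul_apply, smul_eq_mul]
    by_cases hj : j ∈ range (n + 1)
    · rw [sum_eq_single_of_mem j hj fun i _ hij => by rw [l2Form_legendre_of_ne hij, mul_zero],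
        l2Form_legendre_self]
      field_simp
    · have hnj : n < j := by simpa [Nat.lt_succ_iff] using hj
      rw [sum_eq_zero fun i hi => by
        rw [l2Form_legendre_of_ne (ne_of_mem_of_not_mem hi hj), mul_zero]]
      exact l2Form_legendre_of_natDegree_lt (hf.trans_lt hnj)
  rw [LinearMap.congr_fun hext g]
  simp only [LinearMap.sum_apply, LinearMap.smul_apply, smul_eq_mul, l2Form_comm _ _ (legendre _) g,
    mul_assoc]

/-- The contribution of the `L_k` component of `f` to the squared `L²(-1,1)` norm of `f`. -/
noncomputable def legendreEnergy (f : ℝ[X]) (k : ℕ) : ℝ :=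
  (2 * (k : ℝ) + 1) / 2 * ⟪f, legendre k⟫ ^ 2

lemma legendreEnergy_nonneg (f : ℝ[X]) (k : ℕ) : 0 ≤ legendreEnergy f k := by
  unfold legendreEnergy
  positivity

lemma l2Form_self_eq_sum_legendreEnergy {n : ℕ} {f : ℝ[X]} (hf : f.natDegree ≤ n) :
    ⟪f, f⟫ = ∑ k ∈ range (n + 1), legendreEnergy f k := by
  rw [l2Form_eq_sum_legendre hf]
  simp only [legendreEnergy, sq]

lemma l2Form_legendre_succ (f : ℝ[X]) (m : ℕ) :
    (2 * ((m + 1 : ℕ) : ℝ) + 1) * ⟪f, legendre (m + 1)⟫ =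
      ⟪derivative f, legendre m⟫ - ⟪derivative f, legendre (m + 2)⟫ := by
  have hext : (2 * ((m + 1 : ℕ) : ℝ) + 1) • (l2Form (-1) 1).flip (legendre (m + 1)) =
      ((l2Form (-1) 1).flip (legendre m) - (l2Form (-1) 1).flip (legendre (m + 2))) ∘ₗ
        derivative := by
    refine linearMap_ext_legendre fun j => ?_
    simp only [LinearMap.smul_apply, LinearMap.BilinForm.flip_apply, LinearMap.comp_apply,
      LinearMap.sub_apply, smul_eq_mul]
    rcases lt_trichotomy j (m + 1) with hj | rfl | hj
    · rw [l2Form_legendre_of_ne hj.ne, l2Form_derivative_legendre_of_le (by omega),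
        l2Form_derivative_legendre_of_le (by omega), mul_zero, sub_zero]
    · rw [l2Form_legendre_self, l2Form_derivative_legendre_of_lt m.lt_succ_self,
        l2Form_derivative_legendre_of_le (by omega), Odd.neg_one_pow ⟨m, by omega⟩]
      field_simp
      norm_num
    · rw [l2Form_legendre_of_ne hj.ne', l2Form_derivative_legendre_of_lt (by omega)]
      obtain rfl | hj : j = m + 2 ∨ m + 2 < j := by omega
      · rw [l2Form_derivative_legendre_of_le le_rfl, Even.neg_one_pow ⟨m + 1, by ring⟩]
        norm_num
      · rw [l2Form_derivative_legendre_of_lt hj]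
        ring
  exact LinearMap.congr_fun hext f

lemma l2Form_legendre_eq_sub_of_eval_neg_one_eq_zero {f : ℝ[X]} (hf : f.eval (-1) = 0) (m : ℕ) :
    (2 * (m : ℝ) + 1) * ⟪f, legendre m⟫ =
      ⟪derivative f, legendre (m - 1)⟫ - ⟪derivative f, legendre (m + 1)⟫ := by
  cases m with
  | zero =>
    have h := l2Form_derivative_left (-1) 1 f (X - 1)
    rw [hf, zero_mul, sub_zero, eval_sub, eval_X, eval_one, sub_self, mul_zero, derivative_sub,
      derivative_X, derivative_one, sub_zero, map_sub] at h
    simp only [Nat.cast_zero, Nat.zero_sub, zero_add, legendre_zero, legendre_one]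
    linarith
  | succ m => exact l2Form_legendre_succ f m

end Legendre

section Recon

/-- The reconstruction operator `recon p` as a linear map. -/
noncomputable def reconLinear (p : ℕ) : ℝ[X] →ₗ[ℝ] ℝ[X] where
  toFun := recon p
  map_add' u v := by
    simp only [recon, eval_add, add_mul, add_div, add_smul]
    abel
  map_smul' c v := by
    simp only [recon, eval_smul, smul_eq_mul, smul_sub, smul_smul, mul_assoc, mul_div_assoc,
      RingHom.id_apply]

/-- The inner product `(u, v) ↦ ∫ (I u)' (I v)' ds` on `P_p`. -/
noncomputable def reconForm (p : ℕ) : LinearMap.BilinForm ℝ ℝ[X] :=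
  (l2Form (-1) 1).compl₁₂ (derivative ∘ₗ reconLinear p) (derivative ∘ₗ reconLinear p)

lemma reconForm_apply (p : ℕ) (u v : ℝ[X]) :
    reconForm p u v = ⟪derivative (recon p u), derivative (recon p v)⟫ := rfl

variable {p : ℕ} {v : ℝ[X]}

lemma recon_eval_neg_one (p : ℕ) (v : ℝ[X]) : (recon p v).eval (-1) = 0 := by
  have hsign : (-1 : ℝ) ^ p * (-1) ^ p = 1 := by rw [← mul_pow]; norm_num
  simp only [recon, eval_sub, eval_smul, legendre_eval_neg_one, smul_eq_mul, pow_succ]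
  linear_combination -v.eval (-1) * hsign

lemma natDegree_recon_le (hv : v.natDegree ≤ p) : (recon p v).natDegree ≤ p + 1 := by
  have hdiff : (legendre p - legendre (p + 1)).natDegree ≤ p + 1 :=
    (natDegree_sub_le _ _).trans (by rw [natDegree_legendre, natDegree_legendre]; omega)
  exact (natDegree_sub_le _ _).trans
    (max_le (hv.trans p.le_succ) ((natDegree_smul_le _ _).trans hdiff))

lemma natDegree_derivative_recon_le (hv : v.natDegree ≤ p) :
    (derivative (recon p v)).natDegree ≤ p := by
  rw [natDegree_derivative]
  exact Nat.sub_le_of_le_add (natDegree_recon_le hv)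

lemma l2Form_recon (p : ℕ) (v q : ℝ[X]) :
    ⟪recon p v, q⟫ = ⟪v, q⟫ -
      v.eval (-1) * (-1) ^ p / 2 * (⟪legendre p, q⟫ - ⟪legendre (p + 1), q⟫) := by
  simp only [recon, map_sub, map_smul, LinearMap.sub_apply, LinearMap.smul_apply, smul_eq_mul]

lemma l2Form_legendre_eq_sub_of_lt {m : ℕ} (hm : m < p) (v : ℝ[X]) :
    (2 * (m : ℝ) + 1) * ⟪v, legendre m⟫ =
      ⟪derivative (recon p v), legendre (m - 1)⟫ -
        ⟪derivative (recon p v), legendre (m + 1)⟫ := by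
  rw [← l2Form_legendre_eq_sub_of_eval_neg_one_eq_zero (recon_eval_neg_one p v), l2Form_recon,
    l2Form_legendre_of_ne (by omega), l2Form_legendre_of_ne (by omega), sub_zero, mul_zero,
    sub_zero]

lemma l2Form_legendre_eq_add_of_natDegree_le (hv : v.natDegree ≤ p) :
    (2 * (p : ℝ) + 1) * ⟪v, legendre p⟫ =
      ⟪derivative (recon p v), legendre (p - 1)⟫ + ⟪derivative (recon p v), legendre p⟫ := by
  have hw := natDegree_derivative_recon_le hv
  have hp := l2Form_legendre_eq_sub_of_eval_neg_one_eq_zero (recon_eval_neg_one p v) p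
  have hp1 := l2Form_legendre_eq_sub_of_eval_neg_one_eq_zero (recon_eval_neg_one p v) (p + 1)
  rw [l2Form_recon, l2Form_legendre_self, l2Form_legendre_of_ne (by omega),
    l2Form_legendre_of_natDegree_lt (k := p + 1) (by omega)] at hp
  rw [l2Form_recon, l2Form_legendre_self, l2Form_legendre_of_ne (by omega),
    l2Form_legendre_of_natDegree_lt (k := p + 1) (by omega),
    l2Form_legendre_of_natDegree_lt (k := p + 1 + 1) (by omega), Nat.add_sub_cancel] at hp1
  field_simp at hp hp1
  linarith

/-- The index `min (m + 1) p` covers both the generic case `m < p` and the last one `m = p`. -/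
lemma sq_l2Form_legendre_le (hv : v.natDegree ≤ p) {m : ℕ} (hm : m ≤ p) :
    ((2 * (m : ℝ) + 1) * ⟪v, legendre m⟫) ^ 2 ≤
      2 * (⟪derivative (recon p v), legendre (m - 1)⟫ ^ 2 +
        ⟪derivative (recon p v), legendre (min (m + 1) p)⟫ ^ 2) := by
  rcases hm.lt_or_eq with hlt | rfl
  · rw [l2Form_legendre_eq_sub_of_lt hlt, min_eq_left (Nat.succ_le_of_lt hlt), sub_eq_add_neg,
      ← neg_sq ⟪_, legendre (m + 1)⟫]
    exact add_sq_le
  · rw [l2Form_legendre_eq_add_of_natDegree_le hv, min_eq_right m.le_succ]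
    exact add_sq_le

lemma sum_range_sub_one_le {h : ℕ → ℝ} (hh : ∀ k, 0 ≤ h k) (p : ℕ) :
    ∑ m ∈ range (p + 1), h (m - 1) ≤ 2 * ∑ k ∈ range (p + 1), h k := by
  have h0 : h 0 ≤ ∑ k ∈ range (p + 1), h k :=
    single_le_sum (fun k _ => hh k) (mem_range.mpr p.succ_pos)
  have hlast := hh p
  rw [sum_range_succ']
  simp only [Nat.add_sub_cancel, Nat.zero_sub]
  rw [sum_range_succ] at h0 ⊢
  linarith

lemma sum_range_min_succ_le {h : ℕ → ℝ} (hh : ∀ k, 0 ≤ h k) (p : ℕ) :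
    ∑ m ∈ range (p + 1), h (min (m + 1) p) ≤ 2 * ∑ k ∈ range (p + 1), h k := by
  have hlast : h p ≤ ∑ k ∈ range (p + 1), h k :=
    single_le_sum (fun k _ => hh k) (mem_range.mpr p.lt_succ_self)
  have h0 := hh 0
  have hshift : ∑ m ∈ range p, h (min (m + 1) p) = ∑ m ∈ range p, h (m + 1) :=
    sum_congr rfl fun m hm => by rw [min_eq_left (mem_range.mp hm)]
  rw [sum_range_succ, hshift, min_eq_right p.le_succ]
  rw [sum_range_succ'] at hlast ⊢
  linarith

lemma sq_div_le_of_eq_zero_of_lt {j k m : ℕ} {c x : ℝ} (hx : k < j → x = 0)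
    (hkm : 2 * (k : ℝ) + 1 ≤ c * (2 * m + 1)) :
    x ^ 2 / (2 * m + 1) ≤ 2 / ((j : ℝ) + 1) ^ 2 * (c * ((2 * k + 1) / 2 * x ^ 2)) := by
  rcases lt_or_ge k j with hkj | hjk
  · simp [hx hkj]
  have hjk' : (j : ℝ) + 1 ≤ 2 * k + 1 := by
    have : (j : ℝ) ≤ k := by exact_mod_cast hjk
    have : (0 : ℝ) ≤ k := k.cast_nonneg
    linarith
  have hsq : ((j : ℝ) + 1) ^ 2 ≤ (2 * (k : ℝ) + 1) * (c * (2 * m + 1)) :=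
    calc ((j : ℝ) + 1) ^ 2 ≤ (2 * (k : ℝ) + 1) ^ 2 := by gcongr
      _ = (2 * (k : ℝ) + 1) * (2 * k + 1) := sq _
      _ ≤ (2 * (k : ℝ) + 1) * (c * (2 * m + 1)) := by gcongr
  rw [div_mul_eq_mul_div, div_le_div_iff₀ (by positivity) (by positivity)]
  nlinarith [mul_le_mul_of_nonneg_left hsq (sq_nonneg x)]

lemma legendreEnergy_le (hv : v.natDegree ≤ p) {j : ℕ}
    (horth : ∀ k < j, ⟪derivative (recon p v), legendre k⟫ = 0) {m : ℕ} (hm : m ≤ p) :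
    legendreEnergy v m ≤ 2 / ((j : ℝ) + 1) ^ 2 *
      (legendreEnergy (derivative (recon p v)) (m - 1) +
        3 * legendreEnergy (derivative (recon p v)) (min (m + 1) p)) := by
  have hprev : 2 * ((m - 1 : ℕ) : ℝ) + 1 ≤ 1 * (2 * m + 1) := by
    have : ((m - 1 : ℕ) : ℝ) ≤ m := by exact_mod_cast m.sub_le 1
    linarith
  have hnext : 2 * ((min (m + 1) p : ℕ) : ℝ) + 1 ≤ 3 * (2 * m + 1) := by
    have : ((min (m + 1) p : ℕ) : ℝ) ≤ m + 1 := by exact_mod_cast min_le_left _ _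
    have : (0 : ℝ) ≤ m := m.cast_nonneg
    linarith
  have hsq := sq_l2Form_legendre_le hv hm
  calc legendreEnergy v m
      = ((2 * (m : ℝ) + 1) * ⟪v, legendre m⟫) ^ 2 / 2 / (2 * m + 1) := by
        rw [legendreEnergy]
        field_simp
    _ ≤ ⟪derivative (recon p v), legendre (m - 1)⟫ ^ 2 / (2 * m + 1) +
        ⟪derivative (recon p v), legendre (min (m + 1) p)⟫ ^ 2 / (2 * m + 1) := by
        rw [← add_div]
        gcongr
        linarith
    _ ≤ 2 / ((j : ℝ) + 1) ^ 2 * (1 * legendreEnergy (derivative (recon p v)) (m - 1)) +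
        2 / ((j : ℝ) + 1) ^ 2 *
          (3 * legendreEnergy (derivative (recon p v)) (min (m + 1) p)) :=
      add_le_add (sq_div_le_of_eq_zero_of_lt (horth _) hprev)
        (sq_div_le_of_eq_zero_of_lt (horth _) hnext)
    _ = _ := by ring

theorem l2Form_self_le_reconForm_self (hv : v.natDegree ≤ p) {j : ℕ}
    (horth : ∀ k < j, ⟪derivative (recon p v), legendre k⟫ = 0) :
    ⟪v, v⟫ ≤ 16 / ((j : ℝ) + 1) ^ 2 * reconForm p v v := by
  let h := legendreEnergy (derivative (recon p v))
  have hh : ∀ k, 0 ≤ h k := legendreEnergy_nonneg _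
  have hN : reconForm p v v = ∑ k ∈ range (p + 1), h k := by
    rw [reconForm_apply, l2Form_self_eq_sum_legendreEnergy (natDegree_derivative_recon_le hv)]
  calc ⟪v, v⟫ = ∑ m ∈ range (p + 1), legendreEnergy v m := l2Form_self_eq_sum_legendreEnergy hv
    _ ≤ ∑ m ∈ range (p + 1), 2 / ((j : ℝ) + 1) ^ 2 * (h (m - 1) + 3 * h (min (m + 1) p)) :=
        sum_le_sum fun m hm => legendreEnergy_le hv horth (Nat.lt_succ_iff.mp (mem_range.mp hm))
    _ = 2 / ((j : ℝ) + 1) ^ 2 *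
          (∑ m ∈ range (p + 1), h (m - 1) + 3 * ∑ m ∈ range (p + 1), h (min (m + 1) p)) := by
        rw [← mul_sum, sum_add_distrib, mul_sum _ _ (3 : ℝ)]
    _ ≤ 2 / ((j : ℝ) + 1) ^ 2 * (2 * reconForm p v v + 3 * (2 * reconForm p v v)) := by
        rw [hN]
        gcongr
        · exact sum_range_sub_one_le hh p
        · exact sum_range_min_succ_le hh p
    _ = 16 / ((j : ℝ) + 1) ^ 2 * reconForm p v v := by ring

end Recon


/-- **Upper bound on the eigenvalues.** There is a constant `C > 0`, independent of `j` and
`p`, such that for every `p ≥ 0`, the decreasingly ordered eigenvalues `λ_0 ≥ … ≥ λ_p` of the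
generalized eigenvalue problem
`λ ∫_{−1}^{1} (I φ)'(I v)' ds = ∫_{−1}^{1} φ v ds` for all `v ∈ P_p`
(with eigenfunctions `φ_j ∈ P_p` orthonormalized in the inner product
`(u,v) ↦ ∫_{−1}^{1} (I u)'(I v)' ds`) satisfy `λ_j ≤ C (j+1)⁻²`. -/
theorem eigenvalue_upper_bound :
    ∃ C : ℝ, 0 < C ∧ ∀ p : ℕ, ∀ lam : Fin (p + 1) → ℝ, ∀ φ : Fin (p + 1) → Polynomial ℝ,
      (∀ j, (φ j).natDegree ≤ p) →
      (∀ j, 0 < lam j) →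
      (∀ j k : Fin (p + 1),
        (∫ s in (-1 : ℝ)..1,
            (Polynomial.derivative (recon p (φ j))).eval s *
              (Polynomial.derivative (recon p (φ k))).eval s)
          = if j = k then 1 else 0) →
      (∀ j : Fin (p + 1), ∀ v : Polynomial ℝ, v.natDegree ≤ p →
        lam j * (∫ s in (-1 : ℝ)..1,
            (Polynomial.derivative (recon p (φ j))).eval s *
              (Polynomial.derivative (recon p v)).eval s)
          = ∫ s in (-1 : ℝ)..1, (φ j).eval s * v.eval s) →
      (∀ j k : Fin (p + 1), j ≤ k → lam k ≤ lam j) →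
      ∀ j : Fin (p + 1), lam j ≤ C / ((j : ℝ) + 1) ^ 2 := by
  refine ⟨16, by norm_num, fun p lam φ hdeg _ horthonormal heigen hanti j => ?_⟩
  have hdiag (i k : Fin (p + 1)) : l2Form (-1) 1 (φ i) (φ k) = if i = k then lam i else 0 := by
    rw [l2Form_apply, ← heigen i (φ k) (hdeg k), horthonormal, mul_ite, mul_one, mul_zero]
  let ℓ (k : Fin j) : Module.Dual ℝ ℝ[X] :=
    l2Form (-1) 1 (legendre k) ∘ₗ derivative ∘ₗ reconLinear p
  refine le_of_diagonal_of_forall_form_le (A := reconForm p) (B := l2Form (-1) 1)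
    (φ := fun i : Set.Iic j => φ i) (lam := fun i => lam i) (ℓ := ℓ) (by simp) (fun i k => ?_)
    (fun i k => ?_) (fun i => hanti _ _ i.2) fun v hv hℓ => ?_
  · simp only [reconForm_apply, l2Form_apply, horthonormal, Subtype.coe_inj]
  · simp only [hdiag, Subtype.coe_inj]
  · have hvdeg : v ∈ degreeLE ℝ p := by
      refine Submodule.span_le.mpr ?_ hv
      rintro _ ⟨i, rfl⟩
      exact mem_degreeLE.mpr (natDegree_le_iff_degree_le.mp (hdeg i))
    refine l2Form_self_le_reconForm_self
      (natDegree_le_iff_degree_le.mpr (mem_degreeLE.mp hvdeg)) fun k hk => ?_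
    rw [l2Form_comm]
    exact hℓ ⟨k, hk⟩
end
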